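/- Let α > 3 and m > 0 be real numbers, and let f(x) = (α-1)·m^{α-1}·x^{-α} for x ≥ m be the continuous power-law density with exponent α and minimal degree m, with moments ⟨k⟩ = ∫_m^∞ x·f(x) dx and ⟨k²⟩ = ∫_m^∞ x²·f(x) dx. Then 1 - (⟨k⟩/(⟨k²⟩ - ⟨k⟩))² = 1 - [((2-α)/(3-α))·m - 1]^{-2}; that is, for continuous power-law networks with exponent α > 3 and size tending towards infinity, the fraction of links removed at the threshold p_c for random node failures is m(p_c) = 1 - [((2-α)/(3-α))m - 1]^{-2}. -/

import Mathlib

open MeasureTheory ProbabilityTheory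

/-!
The power law with exponent `α` and minimal degree `m` is the Pareto distribution with scale `m`
and shape `α - 1`. Dividing numerator and denominator by `⟨k⟩` gives
`⟨k⟩ / (⟨k²⟩ - ⟨k⟩) = (⟨k²⟩ / ⟨k⟩ - 1)⁻¹`, so only the ratio of the two moments matters, and in it
the normalizing constant cancels.
-/

section Pareto

variable {t r s : ℝ}

theorem integral_paretoMeasure {E : Type*} [NormedAddCommGroup E] [NormedSpace ℝ E]
    (ht : 0 ≤ t) (hr : 0 ≤ r) (f : ℝ → E) :
    ∫ x, f x ∂paretoMeasure t r = ∫ x in Set.Ici t, (r * t ^ r * x ^ (-(r + 1))) • f x := by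
  have density_smul (x : ℝ) : (paretoPDF t r x).toReal • f x
      = (Set.Ici t).indicator (fun x ↦ (r * t ^ r * x ^ (-(r + 1))) • f x) x := by
    rw [paretoPDF, ENNReal.toReal_ofReal (paretoPDFReal_nonneg ht hr x)]
    simp only [paretoPDFReal, Set.indicator_apply, Set.mem_Ici, ite_smul, zero_smul]
  rw [paretoMeasure, integral_withDensity_eq_integral_toReal_smul (f := paretoPDF t r)
    (measurable_paretoPDFReal t r).ennreal_ofReal (.of_forall fun _ ↦ ENNReal.ofReal_lt_top)]
  simp_rw [density_smul]
  exact integral_indicator measurableSet_Ici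

theorem integral_rpow_paretoMeasure (ht : 0 < t) (hr : 0 ≤ r) (hs : s < r) :
    ∫ x, x ^ s ∂paretoMeasure t r = r / (r - s) * t ^ s := by
  have integrand_eq : Set.EqOn (fun x ↦ (r * t ^ r * x ^ (-(r + 1))) • x ^ s)
      (fun x ↦ r * t ^ r * x ^ (-(r - s) - 1)) (Set.Ioi t) := by
    intro x hx
    beta_reduce
    rw [smul_eq_mul, mul_assoc, ← Real.rpow_add (ht.trans hx)]
    ring_nf
  calc ∫ x, x ^ s ∂paretoMeasure t r
    _ = r * t ^ r * ∫ x in Set.Ioi t, x ^ (-(r - s) - 1) := by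
      rw [integral_paretoMeasure ht.le hr, integral_Ici_eq_integral_Ioi,
        setIntegral_congr_fun measurableSet_Ioi integrand_eq, integral_const_mul]
    _ = r * t ^ r * (t ^ (-(r - s)) / (r - s)) := by
      rw [integral_Ioi_rpow_of_lt (by linarith) ht, sub_add_cancel, neg_div_neg_eq]
    _ = r / (r - s) * t ^ (r + -(r - s)) := by
      rw [Real.rpow_add ht]
      ring
    _ = r / (r - s) * t ^ s := by
      rw [neg_sub, add_sub_cancel]

theorem integral_rpow_paretoMeasure_pos (ht : 0 < t) (hr : 0 < r) (hs : s < r) :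
    0 < ∫ x, x ^ s ∂paretoMeasure t r := by
  rw [integral_rpow_paretoMeasure ht hr.le hs]
  exact mul_pos (div_pos hr (sub_pos.2 hs)) (Real.rpow_pos_of_pos ht s)

theorem integral_rpow_div_integral_rpow_paretoMeasure {u : ℝ} (ht : 0 < t) (hr : 0 < r)
    (hs : s < r) (hu : u < r) :
    (∫ x, x ^ u ∂paretoMeasure t r) / ∫ x, x ^ s ∂paretoMeasure t r
      = (r - s) / (r - u) * t ^ (u - s) := by
  rw [integral_rpow_paretoMeasure ht hr.le hu, integral_rpow_paretoMeasure ht hr.le hs,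
    mul_div_mul_comm, ← Real.rpow_sub ht, div_div_div_cancel_left' _ _ hr.ne']

theorem setIntegral_mul_powerLaw_eq_integral_paretoMeasure {α m : ℝ} (hα : 1 ≤ α) (hm : 0 ≤ m)
    (f : ℝ → ℝ) :
    ∫ x in Set.Ici m, f x * ((α - 1) * m ^ (α - 1) * x ^ (-α))
      = ∫ x, f x ∂paretoMeasure m (α - 1) := by
  rw [integral_paretoMeasure hm (sub_nonneg.2 hα)]
  simp only [sub_add_cancel, smul_eq_mul, mul_comm (f _)]

end Pareto

/-- Fraction of links removed at the threshold for random node failures in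
infinite continuous power-law networks with exponent `α > 3` and minimal degree
`m`: `m(p_c) = 1 - [((2-α)/(3-α))m - 1]⁻²`. -/
theorem continuous_power_law_link_fraction_at_threshold (α m : ℝ)
    (hα : 3 < α) (hm : 0 < m) :
    1 - ((∫ x in Set.Ici m, x * ((α - 1) * m ^ (α - 1) * x ^ (-α)))
        / ((∫ x in Set.Ici m, x ^ 2 * ((α - 1) * m ^ (α - 1) * x ^ (-α)))
          - ∫ x in Set.Ici m, x * ((α - 1) * m ^ (α - 1) * x ^ (-α)))) ^ 2
      = 1 - (((2 - α) / (3 - α) * m - 1)⁻¹) ^ 2 := by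
  have one_lt_shape : 1 < α - 1 := by linarith
  have two_lt_shape : 2 < α - 1 := by linarith
  have shape_pos : 0 < α - 1 := by linarith
  have mean_pos : 0 < ∫ x, x ∂paretoMeasure m (α - 1) := by
    simpa only [Real.rpow_one] using integral_rpow_paretoMeasure_pos hm shape_pos one_lt_shape
  have moment_ratio : (∫ x, x ^ 2 ∂paretoMeasure m (α - 1)) / ∫ x, x ∂paretoMeasure m (α - 1)
      = (2 - α) / (3 - α) * m := by
    calc _ = (α - 1 - 1) / (α - 1 - 2) * m ^ (2 - 1 : ℝ) := by
          simpa only [Real.rpow_one, Real.rpow_two] using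
            integral_rpow_div_integral_rpow_paretoMeasure hm shape_pos one_lt_shape two_lt_shape
      _ = (2 - α) / (3 - α) * m := by
          rw [← neg_div_neg_eq, show (2 - 1 : ℝ) = 1 by norm_num, Real.rpow_one]
          ring_nf
  have one_le_exponent : 1 ≤ α := by linarith
  -- When `⟨k²⟩ = ⟨k⟩` the inversion below still holds, both sides being `0` by convention.
  rw [setIntegral_mul_powerLaw_eq_integral_paretoMeasure one_le_exponent hm.le (fun x ↦ x),
    setIntegral_mul_powerLaw_eq_integral_paretoMeasure one_le_exponent hm.le (fun x ↦ x ^ 2),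
    ← inv_div, ← div_sub_one mean_pos.ne', moment_ratio]
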